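/- Let (Ω, 𝔽, P) be a probability space, let {A_i}_{i∈I} be a countable family of pairwise disjoint measurable sets with ⋃_{i∈I} A_i = Ω, and let T : Ω → ℝ be a random variable. Suppose that for each i ∈ I with P(A_i) > 0 there exist m_i ∈ ℝ, v_i > 0 and a measurable set S_i ⊆ ℝ with μ_i(S_i) > 0, where μ_i = N(m_i, v_i), such that the conditional law of T given A_i equals the truncated normal measure μ_i(· | S_i). Define on A_i the pivot π(ω) = F_i(T(ω)) with F_i(t) = μ_i(S_i ∩ (−∞, t])/μ_i(S_i) and the selective p-value p(ω) = 2·min(π(ω), 1 − π(ω)). Then for every α ∈ (0, 1), P(p ≤ α) = α. -/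

import Mathlib

/-!
On a cell `A i` of positive probability, `T` has law `ν = (gaussianReal (m i) (v i))[|S i]`, and
`F i` is exactly the cdf of `ν`. Gaussian measures have no atoms, hence neither has `ν`, and its
cdf is continuous. By the probability integral transform, `ν {F i ≤ u} = u` and
`ν {w ≤ F i} = 1 - w` for `u, w ∈ (0, 1)` (`measure_cdf_le`, `measure_le_cdf`). The event
`2 * min (F i) (1 - F i) ≤ α` is the disjoint union of `{F i ≤ α / 2}` and `{1 - α / 2 ≤ F i}`,
so its `ν`-measure is `α` (`measure_two_sided_le`). The law of total probability over the
countable partition `A` then gives `∑ i, α * P (A i) = α`.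
-/

open MeasureTheory ProbabilityTheory NNReal

lemma continuous_cdf_of_nullSingleton (ν : Measure ℝ) [IsProbabilityMeasure ν]
    [NullSingletonClass ν] : Continuous (cdf ν) := by
  refine continuous_iff_continuousAt.2 fun x => ?_
  rw [(cdf ν).mono.continuousAt_iff_leftLim_eq_rightLim, StieltjesFunction.rightLim_eq]
  refine le_antisymm ((cdf ν).mono.leftLim_le le_rfl) ?_
  -- the jump of the cdf at `x` is the mass of `{x}`
  have h : (cdf ν).measure {x} = 0 := by rw [measure_cdf]; exact measure_singleton x
  rw [StieltjesFunction.measure_singleton, ENNReal.ofReal_eq_zero] at h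
  linarith

lemma exists_cdf_eq (ν : Measure ℝ) [IsProbabilityMeasure ν] [NullSingletonClass ν]
    {u : ℝ} (hu : u ∈ Set.Ioo (0 : ℝ) 1) : ∃ x, cdf ν x = u :=
  mem_range_of_exists_le_of_exists_ge (continuous_cdf_of_nullSingleton ν)
    (((tendsto_cdf_atBot ν).eventually_lt_const hu.1).exists.imp fun _ h => h.le)
    (((tendsto_cdf_atTop ν).eventually_const_lt hu.2).exists.imp fun _ h => h.le)

/-- Lower half of the probability integral transform: the sublevel set is the closed half-line
ending at the largest `u`-quantile. -/
lemma measure_cdf_le (ν : Measure ℝ) [IsProbabilityMeasure ν] [NullSingletonClass ν]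
    {u : ℝ} (hu : u ∈ Set.Ioo (0 : ℝ) 1) : ν {t | cdf ν t ≤ u} = ENNReal.ofReal u := by
  obtain ⟨x, hx⟩ := exists_cdf_eq ν hu
  obtain ⟨y, hy⟩ := ((tendsto_cdf_atTop ν).eventually_const_lt hu.2).exists
  have hbdd : BddAbove {t | cdf ν t ≤ u} :=
    ⟨y, fun t ht => le_of_lt ((monotone_cdf ν).reflect_lt (lt_of_le_of_lt ht hy))⟩
  have hmem : cdf ν (sSup {t | cdf ν t ≤ u}) ≤ u :=
    (isClosed_le (continuous_cdf_of_nullSingleton ν) continuous_const).csSup_mem ⟨x, hx.le⟩ hbdd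
  have hset : {t | cdf ν t ≤ u} = Set.Iic (sSup {t | cdf ν t ≤ u}) :=
    Set.Subset.antisymm (fun t ht => le_csSup hbdd ht)
      fun t ht => (monotone_cdf ν ht).trans hmem
  have hval : cdf ν (sSup {t | cdf ν t ≤ u}) = u :=
    le_antisymm hmem (hx.symm.le.trans (monotone_cdf ν (le_csSup hbdd hx.le)))
  rw [hset, ← ofReal_cdf, hval]

/-- Upper half of the probability integral transform: the superlevel set is the closed half-line
starting at the smallest `w`-quantile. -/
lemma measure_le_cdf (ν : Measure ℝ) [IsProbabilityMeasure ν] [NullSingletonClass ν]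
    {w : ℝ} (hw : w ∈ Set.Ioo (0 : ℝ) 1) : ν {t | w ≤ cdf ν t} = ENNReal.ofReal (1 - w) := by
  obtain ⟨x, hx⟩ := exists_cdf_eq ν hw
  obtain ⟨y, hy⟩ := ((tendsto_cdf_atBot ν).eventually_lt_const hw.1).exists
  have hbdd : BddBelow {t | w ≤ cdf ν t} :=
    ⟨y, fun t ht => le_of_lt ((monotone_cdf ν).reflect_lt (lt_of_lt_of_le hy ht))⟩
  have hmem : w ≤ cdf ν (sInf {t | w ≤ cdf ν t}) :=
    (isClosed_le continuous_const (continuous_cdf_of_nullSingleton ν)).csInf_mem ⟨x, hx.ge⟩ hbdd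
  have hset : {t | w ≤ cdf ν t} = Set.Ici (sInf {t | w ≤ cdf ν t}) :=
    Set.Subset.antisymm (fun t ht => csInf_le hbdd ht)
      fun t ht => hmem.trans (monotone_cdf ν ht)
  have hval : cdf ν (sInf {t | w ≤ cdf ν t}) = w :=
    le_antisymm ((monotone_cdf ν (csInf_le hbdd hx.ge)).trans hx.le) hmem
  rw [hset, ← Set.compl_Iio, prob_compl_eq_one_sub measurableSet_Iio,
    measure_congr Iio_ae_eq_Iic, ← ofReal_cdf, hval, ENNReal.ofReal_sub _ hw.1.le,
    ENNReal.ofReal_one]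

lemma measurableSet_two_sided (ν : Measure ℝ) (α : ℝ) :
    MeasurableSet {t | 2 * min (cdf ν t) (1 - cdf ν t) ≤ α} := by
  have := (monotone_cdf ν).measurable
  exact measurableSet_le (by fun_prop) measurable_const

/-- The two-sided p-value of an atomless law is uniformly distributed. -/
lemma measure_two_sided_le (ν : Measure ℝ) [IsProbabilityMeasure ν] [NullSingletonClass ν]
    {α : ℝ} (hα : α ∈ Set.Ioo (0 : ℝ) 1) :
    ν {t | 2 * min (cdf ν t) (1 - cdf ν t) ≤ α} = ENNReal.ofReal α := by
  obtain ⟨h0, h1⟩ := hα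
  have hset : {t | 2 * min (cdf ν t) (1 - cdf ν t) ≤ α}
      = {t | cdf ν t ≤ α / 2} ∪ {t | 1 - α / 2 ≤ cdf ν t} := by
    ext t
    simp only [Set.mem_ofPred_eq, Set.mem_union]
    rw [← le_div_iff₀' two_pos, min_le_iff, sub_le_comm]
  have hdisj : Disjoint {t | cdf ν t ≤ α / 2} {t | 1 - α / 2 ≤ cdf ν t} := by
    refine Set.disjoint_left.2 fun t ht ht' => ?_
    simp only [Set.mem_ofPred_eq] at ht ht'
    linarith
  rw [hset, measure_union hdisj (measurableSet_le measurable_const (monotone_cdf ν).measurable),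
    measure_cdf_le ν ⟨by linarith, by linarith⟩, measure_le_cdf ν ⟨by linarith, by linarith⟩,
    ← ENNReal.ofReal_add (by linarith) (by linarith)]
  congr 1
  ring

theorem stmt_17 {Ω I : Type*} [MeasurableSpace Ω] [Countable I]
    (P : Measure Ω) [IsProbabilityMeasure P]
    (A : I → Set Ω) (hA : ∀ i, MeasurableSet (A i))
    (hdisj : Pairwise (Function.onFun Disjoint A))
    (hcover : ⋃ i, A i = Set.univ)
    (T : Ω → ℝ) (hT : Measurable T)
    (m : I → ℝ) (v : I → ℝ≥0) (hv : ∀ i, 0 < v i)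
    (S : I → Set ℝ) (hS : ∀ i, MeasurableSet (S i))
    (hSpos : ∀ i, 0 < gaussianReal (m i) (v i) (S i))
    (hlaw : ∀ i, 0 < P (A i) →
      Measure.map T (P[|A i]) = (gaussianReal (m i) (v i))[|S i])
    (F : I → ℝ → ℝ)
    (hF : ∀ i, ∀ t : ℝ, F i t
      = ((gaussianReal (m i) (v i)) (S i ∩ Set.Iic t)).toReal
        / ((gaussianReal (m i) (v i)) (S i)).toReal)
    (p : Ω → ℝ)
    (hp : ∀ i, ∀ ω ∈ A i, p ω = 2 * min (F i (T ω)) (1 - F i (T ω))) :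
    ∀ α ∈ Set.Ioo (0 : ℝ) 1, P {ω : Ω | p ω ≤ α} = ENNReal.ofReal α := by
  intro α hα
  have hcdf : ∀ i t, F i t = cdf ((gaussianReal (m i) (v i))[|S i]) t := by
    intro i t
    have := cond_isProbabilityMeasure (hSpos i).ne'
    rw [hF, cdf_eq_real, measureReal_def, cond_apply (hS i), ENNReal.toReal_mul,
      ENNReal.toReal_inv, div_eq_inv_mul]
  set E : I → Set ℝ := fun i => {t | 2 * min (F i t) (1 - F i t) ≤ α} with hE
  have hEmeas : ∀ i, MeasurableSet (E i) := by
    intro i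
    simp only [hE, hcdf]
    exact measurableSet_two_sided _ _
  have hcell : ∀ i, P (A i ∩ T ⁻¹' E i) = ENNReal.ofReal α * P (A i) := by
    intro i
    rcases eq_or_ne (P (A i)) 0 with h0 | h0
    · rw [h0, mul_zero]
      exact measure_mono_null Set.inter_subset_left h0
    · have := cond_isProbabilityMeasure (hSpos i).ne'
      have := nullSingletonClass_gaussianReal (μ := m i) (hv i).ne'
      have : NullSingletonClass ((gaussianReal (m i) (v i))[|S i]) :=
        ⟨fun x => cond_absolutelyContinuous (measure_singleton x)⟩
      rw [← cond_mul_eq_inter (hA i), ← Measure.map_apply hT (hEmeas i),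
        hlaw i (pos_iff_ne_zero.2 h0)]
      simp only [hE, hcdf]
      rw [measure_two_sided_le _ hα]
  have hset : {ω | p ω ≤ α} = ⋃ i, A i ∩ T ⁻¹' E i := by
    ext ω
    simp only [Set.mem_ofPred_eq, Set.mem_iUnion, Set.mem_inter_iff, Set.mem_preimage, hE]
    constructor
    · intro h
      obtain ⟨i, hi⟩ := Set.mem_iUnion.1 (hcover ▸ Set.mem_univ ω)
      exact ⟨i, hi, hp i ω hi ▸ h⟩
    · rintro ⟨i, hi, h⟩
      rw [hp i ω hi]
      exact h
  rw [hset, measure_iUnion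
    (fun i j hij => (hdisj hij).mono Set.inter_subset_left Set.inter_subset_left)
    (fun i => (hA i).inter (hT (hEmeas i)))]
  simp only [hcell]
  rw [ENNReal.tsum_mul_left, ← measure_iUnion hdisj hA, hcover, measure_univ, mul_one]
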